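/- For every derivable term judgement Γ ⊢ x : A in GSeTT (where x is necessarily a variable), the judgement ⟦Γ⟧_B ⊢ x : ⟦A⟧_B is derivable in HoTT (Lemma 4.1, term part). -/

import Mathlib

/-! ### Deep embedding of the fragment of Martin-Löf type theory ("HoTT") -/

/-- HoTT variable names: `Sum.inl n` is the image of CaTT/GSeTT variable `n`,
`Sum.inr k` are extra HoTT-only names. -/
abbrev HVar : Type := ℕ ⊕ ℕ

/-- The fixed variable `B`, not the name of any CaTT/GSeTT variable. -/
def Bv : HVar := Sum.inr 0

mutual
/-- Pre-terms of HoTT. `J A u x y e P p` is the Paulin-Mohring eliminator with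
base point `u : A`, motive `P` (with bound variables `x y e`) and base case `p`. -/
inductive HTm : Type
  | var : HVar → HTm
  | refl : HTy → HTm → HTm
  | J : HTy → HTm → HVar → HVar → HVar → HTy → HTm → HTm
  | app : HTm → HTm → HTm
  | lam : HVar → HTy → HTm → HTm

/-- Pre-types of HoTT: the Tarski universe `univ`, `el`, identity types and Π-types. -/
inductive HTy : Type
  | univ : HTy
  | el : HTm → HTy
  | id : HTy → HTm → HTm → HTy
  | pi : HVar → HTy → HTy → HTy
end

/-- Pre-substitutions of HoTT (head = most recent binding). -/
abbrev HSubst := List (HVar × HTm)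
/-- Pre-contexts of HoTT (head = most recent declaration). -/
abbrev HCtx := List (HVar × HTy)

def hlookup : HSubst → HVar → HTm
  | [], x => .var x
  | (y, t) :: γ, x => if y = x then t else hlookup γ x

/-- Remove the bindings of a bound variable from a substitution. -/
def hdrop (γ : HSubst) (x : HVar) : HSubst := γ.filter (fun q => q.1 ≠ x)

mutual
/-- Action of substitutions on HoTT pre-terms. -/
def hsubTm : HTm → HSubst → HTm
  | .var x, γ => hlookup γ x
  | .refl A u, γ => .refl (hsubTy A γ) (hsubTm u γ)
  | .J A u x y e P p, γ =>
      .J (hsubTy A γ) (hsubTm u γ) x y e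
        (hsubTy P (hdrop (hdrop (hdrop γ x) y) e)) (hsubTm p γ)
  | .app f u, γ => .app (hsubTm f γ) (hsubTm u γ)
  | .lam x A u, γ => .lam x (hsubTy A γ) (hsubTm u (hdrop γ x))
/-- Action of substitutions on HoTT pre-types. -/
def hsubTy : HTy → HSubst → HTy
  | .univ, _ => .univ
  | .el a, γ => .el (hsubTm a γ)
  | .id A u v, γ => .id (hsubTy A γ) (hsubTm u γ) (hsubTm v γ)
  | .pi x A B, γ => .pi x (hsubTy A γ) (hsubTy B (hdrop γ x))
end

/-- Composition of HoTT substitutions. -/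
def hcomp (δ γ : HSubst) : HSubst := δ.map (fun p => (p.1, hsubTm p.2 γ))

/-- The identity substitution of a context. -/
def hid (Γ : HCtx) : HSubst := Γ.map (fun p => (p.1, HTm.var p.1))

def hassoc : HCtx → HVar → Option HTy
  | [], _ => none
  | (y, A) :: Γ, x => if y = x then some A else hassoc Γ x

mutual
/-- Definitional equality of HoTT pre-terms, generated by the computation rule
`J(A,u,P,p) v refl ≡ p` together with congruence rules. -/
inductive HTmEq : HTm → HTm → Prop
  | jbeta (A : HTy) (u : HTm) (x y e : HVar) (P : HTy) (p v : HTm) (B : HTy) (w : HTm) :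
      HTmEq (.app (.app (.J A u x y e P p) v) (.refl B w)) p
  | refl (u : HTm) : HTmEq u u
  | symm : HTmEq u v → HTmEq v u
  | trans : HTmEq u v → HTmEq v w → HTmEq u w
  | reflCong : HTyEq A A' → HTmEq u u' → HTmEq (.refl A u) (.refl A' u')
  | JCong : HTyEq A A' → HTmEq u u' → HTyEq P P' → HTmEq p p' →
      HTmEq (.J A u x y e P p) (.J A' u' x y e P' p')
  | appCong : HTmEq f f' → HTmEq u u' → HTmEq (.app f u) (.app f' u')
  | lamCong : HTyEq A A' → HTmEq u u' → HTmEq (.lam x A u) (.lam x A' u')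

/-- Definitional equality of HoTT pre-types. -/
inductive HTyEq : HTy → HTy → Prop
  | refl (A : HTy) : HTyEq A A
  | symm : HTyEq A B → HTyEq B A
  | trans : HTyEq A B → HTyEq B C → HTyEq A C
  | elCong : HTmEq a a' → HTyEq (.el a) (.el a')
  | idCong : HTyEq A A' → HTmEq u u' → HTmEq v v' → HTyEq (.id A u v) (.id A' u' v')
  | piCong : HTyEq A A' → HTyEq B B' → HTyEq (.pi x A B) (.pi x A' B')
end

mutual
/-- Validity of HoTT contexts: `⊢ Γ`. -/
inductive HCtxJ : HCtx → Prop
  | nil : HCtxJ []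
  | cons : HCtxJ Γ → HTyJ Γ A → HCtxJ ((x, A) :: Γ)

/-- Validity of HoTT types: `Γ ⊢ A`. -/
inductive HTyJ : HCtx → HTy → Prop
  | univ : HCtxJ Γ → HTyJ Γ .univ
  | el : HTmJ Γ a .univ → HTyJ Γ (.el a)
  | id : HTmJ Γ u A → HTmJ Γ v A → HTyJ Γ (.id A u v)
  | pi : HTyJ Γ A → HTyJ ((x, A) :: Γ) B → HTyJ Γ (.pi x A B)
  | conv : HTyJ Γ A → HTyEq A B → HTyJ Γ B

/-- Typing of HoTT terms: `Γ ⊢ u : A`. -/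
inductive HTmJ : HCtx → HTm → HTy → Prop
  | var : HCtxJ Γ → hassoc Γ x = some A → HTmJ Γ (.var x) A
  | refl : HTmJ Γ u A → HTmJ Γ (.refl A u) (.id A u u)
  | lam : HTyJ Γ A → HTmJ ((x, A) :: Γ) u B → HTmJ Γ (.lam x A u) (.pi x A B)
  | app : HTmJ Γ f (.pi x A B) → HTmJ Γ u A → HTmJ Γ (.app f u) (hsubTy B [(x, u)])
  | J : HTyJ Γ A → HTmJ Γ u A →
      HTyJ ((e, .id A (.var x) (.var y)) :: (y, A) :: (x, A) :: Γ) P →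
      HTmJ Γ p (hsubTy P [(x, u), (y, u), (e, .refl A u)]) →
      HTmJ Γ (.J A u x y e P p)
        (.pi y A (.pi e (.id A u (.var y)) (hsubTy P [(x, u)])))
  | conv : HTmJ Γ u A → HTyEq A B → HTmJ Γ u B
  | convTm : HTmJ Γ u A → HTmEq u v → HTmJ Γ v A

/-- Typing of HoTT substitutions: `Δ ⊢ γ : Γ`. -/
inductive HSubJ : HCtx → HSubst → HCtx → Prop
  | nil : HCtxJ Δ → HSubJ Δ [] []
  | cons : HSubJ Δ γ Γ → HTyJ Γ A → HTmJ Δ t (hsubTy A γ) →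
      HSubJ Δ ((x, t) :: γ) ((x, A) :: Γ)
end

mutual
/-- Iterated identity types `Idⁿ_A(u)`. -/
def idN : ℕ → HTy → HTm → HTy
  | 0, A, _ => A
  | n+1, A, u => .id (idN n A u) (reflN n A u) (reflN n A u)
/-- Iterated reflexivities `reflⁿ_{A,u}`. -/
def reflN : ℕ → HTy → HTm → HTm
  | 0, _, u => u
  | n+1, A, u => .refl (idN n A u) (reflN n A u)
end

/-- Π-lifting `Π_Γ.A`: successively bind all variables of `Γ`. -/
def piLift : HCtx → HTy → HTy
  | [], A => A
  | (x, T) :: Γ, A => piLift Γ (.pi x T A)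

/-- λ-lifting `λ_Γ.u`: successively bind all variables of `Γ`. -/
def lamLift : HCtx → HTm → HTm
  | [], u => u
  | (x, T) :: Γ, u => lamLift Γ (.lam x T u)

/-! ### The dependent type theory GSeTT -/

/-- Pre-types of GSeTT: `⋆` and `u →_A v` (terms of GSeTT are variables, i.e. `ℕ`). -/
inductive GTy : Type
  | obj : GTy
  | arr : GTy → ℕ → ℕ → GTy
deriving DecidableEq

/-- Pre-contexts of GSeTT (head = most recent declaration). -/
abbrev GCtx := List (ℕ × GTy)

def gassoc : GCtx → ℕ → Option GTy
  | [], _ => none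
  | (y, A) :: Γ, x => if y = x then some A else gassoc Γ x

mutual
/-- `⊢ Γ` in GSeTT. -/
inductive GCtxJ : GCtx → Prop
  | nil : GCtxJ []
  | cons : GCtxJ Γ → GTyJ Γ A → GCtxJ ((x, A) :: Γ)
/-- `Γ ⊢ A` in GSeTT. -/
inductive GTyJ : GCtx → GTy → Prop
  | obj : GCtxJ Γ → GTyJ Γ .obj
  | arr : GTmJ Γ u A → GTmJ Γ v A → GTyJ Γ (.arr A u v)
/-- `Γ ⊢ x : A` in GSeTT (terms are variables). -/
inductive GTmJ : GCtx → ℕ → GTy → Prop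
  | var : GCtxJ Γ → gassoc Γ x = some A → GTmJ Γ x A
end

/-- The variables declared in a GSeTT context. -/
def gvars (Γ : GCtx) : List ℕ := Γ.map Prod.fst

/-- The auxiliary judgement `Γ ⊢_ps x : A` recognising ps-contexts;
all declared variables are required to be pairwise distinct. -/
inductive GPsAux : GCtx → ℕ → GTy → Prop
  | pss (x : ℕ) : GPsAux [(x, .obj)] x .obj
  | pse : GPsAux Γ x A → y ∉ gvars Γ → f ∉ gvars Γ → f ≠ y →
      GPsAux ((f, .arr A x y) :: (y, A) :: Γ) f (.arr A x y)
  | psd : GPsAux Γ f (.arr A x y) → GPsAux Γ y A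

/-- The judgement `Γ ⊢_ps` recognising ps-contexts. -/
inductive GPs : GCtx → Prop
  | ps : GPsAux Γ x .obj → GPs Γ

/-- Dimension of a GSeTT type: `dim ⋆ = -1`, `dim (u →_A v) = dim A + 1`. -/
def gdim : GTy → ℤ
  | .obj => -1
  | .arr A _ _ => gdim A + 1

/-- Dimension of a GSeTT context: the maximal dimension of the types of its variables. -/
def gdimCtx (Γ : GCtx) : ℤ := (Γ.map (fun p => gdim p.2)).foldr max (-1)

/-- The `i`-source `∂ᵢ⁻Γ` of a ps-context. -/
def gsrc (i : ℤ) : GCtx → GCtx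
  | (f, F) :: (y, A) :: Δ =>
      if gdim A + 1 ≥ i then gsrc i Δ else (f, F) :: (y, A) :: gsrc i Δ
  | Γ => Γ

/-- The `i`-target `∂ᵢ⁺Γ` of a ps-context. -/
def gtgt (i : ℤ) : GCtx → GCtx
  | (f, F) :: (y, A) :: Δ =>
      if gdim A + 1 > i then gtgt i Δ
      else if gdim A + 1 = i then (y, A) :: (gtgt i Δ).tail
      else (f, F) :: (y, A) :: gtgt i Δ
  | Γ => Γ

/-- Translation of GSeTT types into HoTT. -/
def ginterpTy : GTy → HTy
  | .obj => .el (.var Bv)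
  | .arr A x y => .id (ginterpTy A) (.var (Sum.inl x)) (.var (Sum.inl y))

/-- Translation of GSeTT contexts into HoTT contexts (`⟦∅⟧_B = (B : Type)`). -/
def ginterpCtx : GCtx → HCtx
  | [] => [(Bv, .univ)]
  | (x, A) :: Γ => (Sum.inl x, ginterpTy A) :: ginterpCtx Γ


theorem hassoc_Bv (Γ : GCtx) : hassoc (ginterpCtx Γ) Bv = some .univ := by
  induction Γ with
  | nil => simp [ginterpCtx, hassoc]
  | cons p Γ ih => simpa [ginterpCtx, hassoc, Bv] using ih

theorem hassoc_ginterp (Γ : GCtx) (x : ℕ) (A : GTy) (h : gassoc Γ x = some A) :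
    hassoc (ginterpCtx Γ) (Sum.inl x) = some (ginterpTy A) := by
  induction Γ with
  | nil => simp [gassoc] at h
  | cons p Γ ih =>
    obtain ⟨y, C⟩ := p
    by_cases hy : y = x
    · simp_all [ginterpCtx, hassoc, gassoc]
    · simp_all [ginterpCtx, hassoc, gassoc]

mutual
theorem ginterp_ctx : ∀ {Γ : GCtx}, GCtxJ Γ → HCtxJ (ginterpCtx Γ)
  | _, .nil => .cons .nil (.univ .nil)
  | _, .cons h hA => .cons (ginterp_ctx h) (ginterp_ty hA)
theorem ginterp_ty : ∀ {Γ : GCtx} {A : GTy}, GTyJ Γ A → HTyJ (ginterpCtx Γ) (ginterpTy A)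
  | _, _, .obj h => .el (.var (ginterp_ctx h) (hassoc_Bv _))
  | _, _, .arr hu hv => .id (ginterp_tm hu) (ginterp_tm hv)
theorem ginterp_tm : ∀ {Γ : GCtx} {x : ℕ} {A : GTy}, GTmJ Γ x A →
    HTmJ (ginterpCtx Γ) (.var (Sum.inl x)) (ginterpTy A)
  | _, _, _, .var h e => .var (ginterp_ctx h) (hassoc_ginterp _ _ _ e)
end

/-- Lemma 4.1, term part. -/
theorem stmt9 (Γ : GCtx) (x : ℕ) (A : GTy) (h : GTmJ Γ x A) :
    HTmJ (ginterpCtx Γ) (.var (Sum.inl x)) (ginterpTy A) := ginterp_tm h
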